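/- Let N : [0,∞) → [0,∞) be a nondecreasing step function with polynomial growth, of the form N(t) = #{i : λ_i < t} for a sequence 0 = λ_0 < λ_1 ≤ λ_2 ≤ ⋯ → ∞, and suppose for constants C > 0, m ≥ 0 that s ∫_0^∞ e^{-st} N(t) dt ~ C·Γ(m/2+1)·s^{-m/2} as s → 0⁺. Then N(t) ~ C·t^{m/2} as t → ∞. -/

import Mathlib

open Filter MeasureTheory

/-!
Karamata's argument. Rescaling turns the hypothesis into a statement about the family
`F_T(u) = N(Tu) / T^α`: for each fixed `s > 0` its Laplace transform at `s` converges, as `T → ∞`,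
to that of `C u^α`. At `s = k + 1` the Laplace transform is the `k`-th moment of the weight
`e^{-u} F_T(u) du` in the variable `y = e^{-u} ∈ [0, 1]`, so by Weierstrass approximation the
weights converge when tested against every continuous function of `y`. Since `F_T` is monotone,
`F_T(1)` dominates its averages over windows `(a, 1)` and is dominated by its averages over windows
`(1, b)`; letting the windows shrink to `1` gives `F_T(1) → C`.
-/

open Real Set Topology

section Moments

variable {X ι : Type*} [MeasurableSpace X] {μ : Measure X} {φ w : X → ℝ} {a b : ℝ}

theorem integrable_comp_mul_of_mem_Icc (hφ : AEStronglyMeasurable φ μ)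
    (hφab : ∀ᵐ x ∂μ, φ x ∈ Icc a b) (hw : Integrable w μ) {g : ℝ → ℝ} (hg : Continuous g) :
    Integrable (fun x => g (φ x) * w x) μ := by
  obtain ⟨B, hB⟩ := isCompact_Icc.exists_bound_of_continuousOn (hg.continuousOn (s := Icc a b))
  exact hw.bdd_mul (hg.comp_aestronglyMeasurable hφ) (hφab.mono fun x hx => hB _ hx)

theorem abs_integral_comp_mul_sub_le (hφ : AEStronglyMeasurable φ μ)
    (hφab : ∀ᵐ x ∂μ, φ x ∈ Icc a b) (hw : Integrable w μ) {g h : ℝ → ℝ} (hg : Continuous g)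
    (hh : Continuous h) {δ : ℝ} (hgh : ∀ y ∈ Icc a b, |g y - h y| ≤ δ) :
    |∫ x, g (φ x) * w x ∂μ - ∫ x, h (φ x) * w x ∂μ| ≤ δ * ∫ x, |w x| ∂μ := by
  rw [← integral_sub (integrable_comp_mul_of_mem_Icc hφ hφab hw hg)
    (integrable_comp_mul_of_mem_Icc hφ hφab hw hh), ← integral_const_mul, ← norm_eq_abs]
  refine norm_integral_le_of_norm_le (hw.abs.const_mul δ) (hφab.mono fun x hx => ?_)
  rw [← sub_mul, norm_mul, norm_eq_abs, norm_eq_abs]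
  exact mul_le_mul_of_nonneg_right (hgh _ hx) (abs_nonneg _)

theorem integral_polynomial_eval_mul (hφ : AEStronglyMeasurable φ μ)
    (hφab : ∀ᵐ x ∂μ, φ x ∈ Icc a b) (hw : Integrable w μ) (p : Polynomial ℝ) :
    ∫ x, p.eval (φ x) * w x ∂μ =
      ∑ k ∈ Finset.range (p.natDegree + 1), p.coeff k * ∫ x, φ x ^ k * w x ∂μ := by
  simp only [Polynomial.eval_eq_sum_range, Finset.sum_mul, mul_assoc]
  rw [integral_finsetSum _ fun k _ =>
    (integrable_comp_mul_of_mem_Icc hφ hφab hw (continuous_pow k)).const_mul (p.coeff k)]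
  simp only [integral_const_mul]

theorem tendsto_integral_polynomial_eval_mul_of_tendsto_moments {L : Filter ι} {W : ι → X → ℝ}
    (hφ : AEStronglyMeasurable φ μ) (hφab : ∀ᵐ x ∂μ, φ x ∈ Icc a b)
    (hW : ∀ᶠ i in L, Integrable (W i) μ) (hw : Integrable w μ)
    (hmom : ∀ k : ℕ, Tendsto (fun i => ∫ x, φ x ^ k * W i x ∂μ) L (𝓝 (∫ x, φ x ^ k * w x ∂μ)))
    (p : Polynomial ℝ) :
    Tendsto (fun i => ∫ x, p.eval (φ x) * W i x ∂μ) L (𝓝 (∫ x, p.eval (φ x) * w x ∂μ)) := by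
  rw [integral_polynomial_eval_mul hφ hφab hw]
  refine (tendsto_finsetSum _ fun k _ => (hmom k).const_mul (p.coeff k)).congr' ?_
  exact hW.mono fun i hi => (integral_polynomial_eval_mul hφ hφab hi p).symm

theorem tendsto_integral_comp_mul_of_tendsto_moments {L : Filter ι} {W : ι → X → ℝ}
    (hφ : AEStronglyMeasurable φ μ) (hφab : ∀ᵐ x ∂μ, φ x ∈ Icc a b)
    (hW : ∀ᶠ i in L, Integrable (W i) μ) (hW0 : ∀ᶠ i in L, 0 ≤ᵐ[μ] W i) (hw : Integrable w μ)
    (hmom : ∀ k : ℕ, Tendsto (fun i => ∫ x, φ x ^ k * W i x ∂μ) L (𝓝 (∫ x, φ x ^ k * w x ∂μ)))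
    {g : ℝ → ℝ} (hg : Continuous g) :
    Tendsto (fun i => ∫ x, g (φ x) * W i x ∂μ) L (𝓝 (∫ x, g (φ x) * w x ∂μ)) := by
  have hmass : Tendsto (fun i => ∫ x, |W i x| ∂μ) L (𝓝 (∫ x, w x ∂μ)) := by
    have h0 : Tendsto (fun i => ∫ x, W i x ∂μ) L (𝓝 (∫ x, w x ∂μ)) := by simpa using hmom 0
    refine h0.congr' (hW0.mono fun i hi => integral_congr_ae ?_)
    exact hi.mono fun x hx => (abs_of_nonneg hx).symm
  refine Metric.tendsto_nhds.2 fun ε hε => ?_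
  obtain ⟨δ, hδ, hδε⟩ := exists_pos_mul_lt hε (∫ x, w x ∂μ + ∫ x, |w x| ∂μ)
  obtain ⟨p, hp⟩ := exists_polynomial_near_of_continuousOn a b g hg.continuousOn δ hδ
  have hpoly := tendsto_integral_polynomial_eval_mul_of_tendsto_moments hφ hφab hW hw hmom p
  have happrox {v : X → ℝ} (hv : Integrable v μ) :
      |∫ x, p.eval (φ x) * v x ∂μ - ∫ x, g (φ x) * v x ∂μ| ≤ δ * ∫ x, |v x| ∂μ :=
    abs_integral_comp_mul_sub_le hφ hφab hv p.continuous hg fun y hy => (hp y hy).le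
  have herror : Tendsto (fun i => δ * ∫ x, |W i x| ∂μ +
      dist (∫ x, p.eval (φ x) * W i x ∂μ) (∫ x, p.eval (φ x) * w x ∂μ) + δ * ∫ x, |w x| ∂μ) L
      (𝓝 (δ * ∫ x, w x ∂μ + 0 + δ * ∫ x, |w x| ∂μ)) :=
    ((hmass.const_mul δ).add (tendsto_iff_dist_tendsto_zero.1 hpoly)).add_const _
  filter_upwards [hW, herror.eventually_lt_const (u := ε) (by linarith)] with i hi hlt
  calc dist (∫ x, g (φ x) * W i x ∂μ) (∫ x, g (φ x) * w x ∂μ)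
      ≤ dist (∫ x, g (φ x) * W i x ∂μ) (∫ x, p.eval (φ x) * W i x ∂μ) +
          dist (∫ x, p.eval (φ x) * W i x ∂μ) (∫ x, p.eval (φ x) * w x ∂μ) +
          dist (∫ x, p.eval (φ x) * w x ∂μ) (∫ x, g (φ x) * w x ∂μ) := dist_triangle4 _ _ _ _
    _ ≤ δ * ∫ x, |W i x| ∂μ +
          dist (∫ x, p.eval (φ x) * W i x ∂μ) (∫ x, p.eval (φ x) * w x ∂μ) +
          δ * ∫ x, |w x| ∂μ :=
        add_le_add_three (dist_comm _ _ |>.trans_le (happrox hi)) le_rfl (happrox hw)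
    _ < ε := hlt

end Moments

/-- The Laplace transform of a function on the half-line `(0, ∞)`, at a real point `s`. It is `0`
where the integral diverges. -/
noncomputable def laplaceTransform (f : ℝ → ℝ) (s : ℝ) : ℝ :=
  ∫ t in Ioi (0 : ℝ), exp (-s * t) * f t

theorem laplaceTransform_const_mul (c : ℝ) (f : ℝ → ℝ) (s : ℝ) :
    laplaceTransform (fun t => c * f t) s = c * laplaceTransform f s := by
  simp only [laplaceTransform, mul_left_comm _ c, integral_const_mul]

theorem laplaceTransform_comp_mul_left (f : ℝ → ℝ) (s : ℝ) {T : ℝ} (hT : 0 < T) :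
    laplaceTransform (fun t => f (T * t)) s = T⁻¹ * laplaceTransform f (s * T⁻¹) := by
  have h := integral_comp_mul_left_Ioi (fun t => exp (-(s * T⁻¹) * t) * f t) 0 hT
  rw [mul_zero, smul_eq_mul] at h
  rw [laplaceTransform, laplaceTransform, ← h]
  congr! 4 with t
  field_simp

theorem laplaceTransform_rpow {α s : ℝ} (hα : -1 < α) (hs : 0 < s) :
    laplaceTransform (fun t => t ^ α) s = (s ^ (α + 1))⁻¹ * Gamma (α + 1) := by
  have h := integral_rpow_mul_exp_neg_mul_Ioi (a := α + 1) (by linarith) hs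
  rw [add_sub_cancel_right, one_div, inv_rpow hs.le] at h
  simpa only [laplaceTransform, neg_mul, mul_comm (exp _)] using h

theorem laplaceTransform_natCast_add_one (f : ℝ → ℝ) (k : ℕ) :
    laplaceTransform f (k + 1) = ∫ u in Ioi (0 : ℝ), exp (-u) ^ k * (exp (-u) * f u) := by
  refine setIntegral_congr_fun measurableSet_Ioi fun u _ => ?_
  have hexp : exp (-((k : ℝ) + 1) * u) = exp (-u) ^ k * exp (-u) := by
    rw [← exp_nat_mul, ← exp_add]
    ring_nf
  simp only [hexp, mul_assoc]

theorem ae_exp_neg_mem_Icc : ∀ᵐ u ∂volume.restrict (Ioi (0 : ℝ)), exp (-u) ∈ Icc (0 : ℝ) 1 :=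
  (ae_restrict_mem measurableSet_Ioi).mono fun _ hu =>
    ⟨(exp_pos _).le, exp_le_one_iff.2 (neg_nonpos.2 (le_of_lt hu))⟩

theorem integrableOn_comp_exp_neg_mul {g w : ℝ → ℝ} (hg : Continuous g)
    (hw : IntegrableOn w (Ioi 0)) : IntegrableOn (fun u => g (exp (-u)) * w u) (Ioi 0) :=
  integrable_comp_mul_of_mem_Icc (by fun_prop) ae_exp_neg_mem_Icc hw hg

/-- A continuous averaging kernel for the window `(a, b)`: in the coordinate `y = exp (-u)`, the
function `g` is a probability density with respect to `exp (-u) du` on `(0, ∞)` that vanishes for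
`u` outside `(a, b)`. It is a function of `y` because polynomials in `y` are what Laplace
transforms test against. -/
structure IsExpWindow (g : ℝ → ℝ) (a b : ℝ) : Prop where
  continuous : Continuous g
  nonneg : ∀ y, 0 ≤ g y
  eq_zero : ∀ u ∉ Ioo a b, g (exp (-u)) = 0
  integral_eq_one : ∫ u in Ioi (0 : ℝ), g (exp (-u)) * exp (-u) = 1

theorem exists_isExpWindow {a b : ℝ} (ha : 0 ≤ a) (hab : a < b) : ∃ g, IsExpWindow g a b := by
  obtain ⟨g, hsupp, hgdiff, hg01⟩ :=
    (isOpen_Ioo (a := exp (-b)) (b := exp (-a))).exists_contDiff_support_eq (n := 0)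
  have hg0 (y : ℝ) : 0 ≤ g y := (hg01 (mem_range_self y)).1
  have hne (u : ℝ) : g (exp (-u)) ≠ 0 ↔ u ∈ Ioo a b := by
    rw [← Function.mem_support, hsupp]
    simp [and_comm]
  have hpos : 0 < ∫ u in Ioi (0 : ℝ), g (exp (-u)) * exp (-u) := by
    rw [integral_pos_iff_support_of_nonneg (fun u => mul_nonneg (hg0 _) (exp_pos _).le)
      (integrableOn_comp_exp_neg_mul hgdiff.continuous (integrableOn_exp_neg_Ioi 0))]
    have : (Function.support fun u => g (exp (-u)) * exp (-u)) = Ioo a b := by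
      ext u
      simp [hne u, (exp_pos _).ne']
    rw [this, Measure.restrict_apply measurableSet_Ioo,
      inter_eq_left.2 (Ioo_subset_Ioi_self.trans (Ioi_subset_Ioi ha)), volume_Ioo]
    simpa using hab
  refine ⟨fun y => (∫ u in Ioi (0 : ℝ), g (exp (-u)) * exp (-u))⁻¹ * g y,
    hgdiff.continuous.const_mul _, fun y => mul_nonneg (inv_nonneg.2 hpos.le) (hg0 y),
    fun u hu => ?_, ?_⟩
  · simp only [not_not.1 (mt (hne u).1 hu), mul_zero]
  · simp only [mul_assoc, integral_const_mul]
    exact inv_mul_cancel₀ hpos.ne'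

theorem IsExpWindow.integral_le {g f : ℝ → ℝ} {a b c : ℝ} (hg : IsExpWindow g a b)
    (hf : IntegrableOn (fun u => exp (-u) * f u) (Ioi 0)) (hfc : ∀ u ∈ Ioo a b, f u ≤ c) :
    ∫ u in Ioi (0 : ℝ), g (exp (-u)) * (exp (-u) * f u) ≤ c := by
  have hc : IntegrableOn (fun u => exp (-u) * c) (Ioi 0) :=
    Integrable.mul_const (integrableOn_exp_neg_Ioi 0) c
  calc ∫ u in Ioi (0 : ℝ), g (exp (-u)) * (exp (-u) * f u)
      ≤ ∫ u in Ioi (0 : ℝ), g (exp (-u)) * (exp (-u) * c) := by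
        refine setIntegral_mono (integrableOn_comp_exp_neg_mul hg.continuous hf)
          (integrableOn_comp_exp_neg_mul hg.continuous hc) fun u => ?_
        by_cases hu : u ∈ Ioo a b
        · exact mul_le_mul_of_nonneg_left
            (mul_le_mul_of_nonneg_left (hfc u hu) (exp_pos _).le) (hg.nonneg _)
        · simp [hg.eq_zero u hu]
    _ = c := by simp only [← mul_assoc, integral_mul_const, hg.integral_eq_one, one_mul]

theorem IsExpWindow.le_integral {g f : ℝ → ℝ} {a b c : ℝ} (hg : IsExpWindow g a b)
    (hf : IntegrableOn (fun u => exp (-u) * f u) (Ioi 0)) (hcf : ∀ u ∈ Ioo a b, c ≤ f u) :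
    c ≤ ∫ u in Ioi (0 : ℝ), g (exp (-u)) * (exp (-u) * f u) := by
  have hf_neg : IntegrableOn (fun u => exp (-u) * -f u) (Ioi 0) := by
    simpa only [mul_neg] using! Integrable.neg hf
  simpa only [mul_neg, integral_neg, neg_le_neg_iff] using
    hg.integral_le hf_neg fun u hu => neg_le_neg (hcf u hu)

section Continuity

variable {ι : Type*} {L : Filter ι} {F : ι → ℝ → ℝ} {f : ℝ → ℝ}

theorem tendsto_integral_comp_exp_neg_of_tendsto_laplaceTransform
    (hF0 : ∀ᶠ i in L, ∀ u ∈ Ioi 0, 0 ≤ F i u)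
    (hF : ∀ᶠ i in L, IntegrableOn (fun u => exp (-u) * F i u) (Ioi 0))
    (hf : IntegrableOn (fun u => exp (-u) * f u) (Ioi 0))
    (hlap : ∀ k : ℕ, Tendsto (fun i => laplaceTransform (F i) (k + 1)) L
      (𝓝 (laplaceTransform f (k + 1)))) {g : ℝ → ℝ} (hg : Continuous g) :
    Tendsto (fun i => ∫ u in Ioi (0 : ℝ), g (exp (-u)) * (exp (-u) * F i u)) L
      (𝓝 (∫ u in Ioi (0 : ℝ), g (exp (-u)) * (exp (-u) * f u))) := by
  refine tendsto_integral_comp_mul_of_tendsto_moments (by fun_prop) ae_exp_neg_mem_Icc hF ?_ hf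
    (fun k => by simpa only [laplaceTransform_natCast_add_one] using hlap k) hg
  filter_upwards [hF0] with i hi
  filter_upwards [ae_restrict_mem measurableSet_Ioi] with u hu
  exact mul_nonneg (exp_pos _).le (hi u hu)

theorem tendsto_of_monotoneOn_of_tendsto_laplaceTransform
    (hmono : ∀ᶠ i in L, MonotoneOn (F i) (Ioi 0)) (hF0 : ∀ᶠ i in L, ∀ u ∈ Ioi 0, 0 ≤ F i u)
    (hF : ∀ᶠ i in L, IntegrableOn (fun u => exp (-u) * F i u) (Ioi 0))
    (hf : IntegrableOn (fun u => exp (-u) * f u) (Ioi 0))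
    (hlap : ∀ k : ℕ, Tendsto (fun i => laplaceTransform (F i) (k + 1)) L
      (𝓝 (laplaceTransform f (k + 1)))) {x : ℝ} (hx : 0 < x) (hfx : ContinuousAt f x) :
    Tendsto (fun i => F i x) L (𝓝 (f x)) := by
  refine tendsto_order.2 ⟨fun c hc => ?_, fun c hc => ?_⟩
  · obtain ⟨c', hcc', hc'⟩ := exists_between hc
    obtain ⟨a, hax, ha⟩ := mem_nhdsLE_iff_exists_Icc_subset.1 <| mem_nhdsWithin_of_mem_nhds <|
      (lt_mem_nhds hx).and (hfx.eventually_const_lt hc')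
    have ha0 : 0 < a := (ha (left_mem_Icc.2 hax.le)).1
    obtain ⟨g, hg⟩ := exists_isExpWindow ha0.le hax
    have hlim := tendsto_integral_comp_exp_neg_of_tendsto_laplaceTransform hF0 hF hf hlap
      hg.continuous
    have hlt := hcc'.trans_le <| hg.le_integral hf fun u hu => (ha (Ioo_subset_Icc_self hu)).2.le
    filter_upwards [hlim.eventually_const_lt hlt, hmono, hF] with i hi hmono_i hF_i
    exact hi.trans_le <| hg.integral_le hF_i fun u hu => hmono_i (ha0.trans hu.1) hx hu.2.le
  · obtain ⟨c', hc', hcc'⟩ := exists_between hc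
    obtain ⟨b, hxb, hb⟩ := mem_nhdsGE_iff_exists_Icc_subset.1 <| mem_nhdsWithin_of_mem_nhds <|
      hfx.eventually_lt_const hc'
    obtain ⟨g, hg⟩ := exists_isExpWindow hx.le hxb
    have hlim := tendsto_integral_comp_exp_neg_of_tendsto_laplaceTransform hF0 hF hf hlap
      hg.continuous
    have hlt := (hg.integral_le hf fun u hu => (hb (Ioo_subset_Icc_self hu)).le).trans_lt hcc'
    filter_upwards [hlim.eventually_lt_const hlt, hmono, hF] with i hi hmono_i hF_i
    exact (hg.le_integral hF_i fun u hu => hmono_i hx (hx.trans hu.1) hu.1.le).trans_lt hi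

end Continuity

section Karamata

variable {N : ℝ → ℝ} {α C : ℝ}

theorem tendsto_laplaceTransform_rescale (hα : -1 < α)
    (hlap : Tendsto (fun s => s ^ (α + 1) * laplaceTransform N s) (𝓝[>] 0)
      (𝓝 (C * Gamma (α + 1)))) {s : ℝ} (hs : 0 < s) :
    Tendsto (fun T => laplaceTransform (fun u => (T ^ α)⁻¹ * N (T * u)) s) atTop
      (𝓝 (laplaceTransform (fun u => C * u ^ α) s)) := by
  have hsT : Tendsto (fun T : ℝ => s * T⁻¹) atTop (𝓝[>] 0) := by
    refine tendsto_nhdsWithin_iff.2 ⟨by simpa using tendsto_inv_atTop_zero.const_mul s, ?_⟩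
    filter_upwards [eventually_gt_atTop 0] with T hT using mul_pos hs (inv_pos.2 hT)
  rw [laplaceTransform_const_mul, laplaceTransform_rpow hα hs, mul_left_comm]
  refine ((hlap.comp hsT).const_mul (s ^ (α + 1))⁻¹).congr' ?_
  filter_upwards [eventually_gt_atTop 0] with T hT
  have hsα : s ^ (α + 1) ≠ 0 := (rpow_pos_of_pos hs _).ne'
  rw [laplaceTransform_const_mul, laplaceTransform_comp_mul_left N s hT, Function.comp_apply,
    mul_rpow hs.le (inv_pos.2 hT).le, inv_rpow hT.le, rpow_add_one hT.ne']
  field_simp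

theorem eventually_integrableOn_exp_neg_mul_rescale
    (hint : ∀ᶠ s in 𝓝[>] (0 : ℝ), IntegrableOn (fun t => exp (-s * t) * N t) (Ioi 0)) (c : ℝ → ℝ) :
    ∀ᶠ T in atTop, IntegrableOn (fun u => exp (-u) * (c T * N (T * u))) (Ioi 0) := by
  filter_upwards [tendsto_inv_atTop_nhdsGT_zero.eventually hint, eventually_gt_atTop 0]
    with T hT hT0
  have h := (integrableOn_Ioi_comp_mul_left_iff
    (fun t => exp (-T⁻¹ * t) * N t) 0 hT0).2 (by simpa using hT)
  simpa [hT0.ne', mul_left_comm, IntegrableOn] using Integrable.const_mul h (c T)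

theorem integrableOn_exp_neg_mul_const_mul_rpow (hα : -1 < α) (c : ℝ) :
    IntegrableOn (fun u => exp (-u) * (c * u ^ α)) (Ioi 0) := by
  have h := (GammaIntegral_convergent (s := α + 1) (by linarith)).const_mul c
  simpa only [add_sub_cancel_right, mul_left_comm c] using! h

theorem tendsto_div_rpow_of_tendsto_laplaceTransform (hN : MonotoneOn N (Ioi 0))
    (hN0 : ∀ t ∈ Ioi 0, 0 ≤ N t) (hα : -1 < α)
    (hint : ∀ᶠ s in 𝓝[>] (0 : ℝ), IntegrableOn (fun t => exp (-s * t) * N t) (Ioi 0))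
    (hlap : Tendsto (fun s => s ^ (α + 1) * laplaceTransform N s) (𝓝[>] 0)
      (𝓝 (C * Gamma (α + 1)))) :
    Tendsto (fun T => N T / T ^ α) atTop (𝓝 C) := by
  have hpow {T : ℝ} (hT : 0 < T) : 0 ≤ (T ^ α)⁻¹ := inv_nonneg.2 (rpow_nonneg hT.le α)
  have hmono : ∀ᶠ T in atTop, MonotoneOn (fun u => (T ^ α)⁻¹ * N (T * u)) (Ioi 0) := by
    filter_upwards [eventually_gt_atTop 0] with T hT u hu v hv huv
    exact mul_le_mul_of_nonneg_left
      (hN (mul_pos hT hu) (mul_pos hT hv) (mul_le_mul_of_nonneg_left huv hT.le)) (hpow hT)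
  have hnonneg : ∀ᶠ T in atTop, ∀ u ∈ Ioi 0, 0 ≤ (T ^ α)⁻¹ * N (T * u) := by
    filter_upwards [eventually_gt_atTop 0] with T hT u hu
    exact mul_nonneg (hpow hT) (hN0 _ (mul_pos hT hu))
  have hlim := tendsto_of_monotoneOn_of_tendsto_laplaceTransform hmono hnonneg
    (eventually_integrableOn_exp_neg_mul_rescale hint _)
    (integrableOn_exp_neg_mul_const_mul_rpow hα C)
    (fun k => tendsto_laplaceTransform_rescale hα hlap k.cast_add_one_pos) one_pos
    (continuousAt_const.mul (continuousAt_rpow_const 1 α (Or.inl one_ne_zero)))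
  simpa only [mul_one, one_rpow, div_eq_inv_mul] using hlim

theorem tauberian_counting_function_general (hN : MonotoneOn N (Ioi 0))
    (hN0 : ∀ t ∈ Ioi 0, 0 ≤ N t) (hα : -1 < α) (hC : C ≠ 0)
    (hlap : Tendsto (fun s => (s * ∫ t in Ioi (0 : ℝ), exp (-s * t) * N t) /
      (C * Gamma (α + 1) * s ^ (-α))) (𝓝[>] 0) (𝓝 1)) :
    Tendsto (fun t => N t / (C * t ^ α)) atTop (𝓝 1) := by
  have hΓ : Gamma (α + 1) ≠ 0 := (Gamma_pos_of_pos (by linarith)).ne'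
  -- A divergent integral would be `0`, and the ratio with it.
  have hint : ∀ᶠ s in 𝓝[>] (0 : ℝ), IntegrableOn (fun t => exp (-s * t) * N t) (Ioi 0) := by
    filter_upwards [hlap.eventually_ne one_ne_zero] with s hs
    refine Integrable.of_integral_ne_zero fun h => hs ?_
    rw [h, mul_zero, zero_div]
  have hlap' : Tendsto (fun s => s ^ (α + 1) * laplaceTransform N s) (𝓝[>] 0)
      (𝓝 (C * Gamma (α + 1))) := by
    rw [← mul_one (C * Gamma (α + 1))]
    refine (hlap.const_mul (C * Gamma (α + 1))).congr' ?_
    filter_upwards [self_mem_nhdsWithin] with s (hs : 0 < s)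
    have : s ^ α ≠ 0 := (rpow_pos_of_pos hs α).ne'
    rw [laplaceTransform, rpow_neg hs.le, rpow_add_one hs.ne']
    field_simp
  have h := (tendsto_div_rpow_of_tendsto_laplaceTransform hN hN0 hα hint hlap').div_const C
  simpa only [div_self hC, div_div, mul_comm] using h

end Karamata

theorem monotone_natCard_setOf_lt {ι β : Type*} [LinearOrder β] {l : ι → β}
    (hl : Tendsto l cofinite atTop) : Monotone fun t => Nat.card {i | l i < t} := fun _ t hst =>
  Nat.card_mono (by simpa using hl.eventually_ge_atTop t) fun _ hi => lt_of_lt_of_le hi hst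

/-- Tauberian theorem for eigenvalue counting functions: if
`N(t) = #{i : λ_i < t}` for `0 = λ_0 < λ_1 ≤ λ_2 ≤ ⋯ → ∞`, and
`s ∫_0^∞ e^{-st} N(t) dt ~ C·Γ(m/2+1)·s^{-m/2}` as `s → 0⁺`, then
`N(t) ~ C·t^{m/2}` as `t → ∞`. -/
theorem tauberian_counting_function (l : ℕ → ℝ) (h0 : l 0 = 0)
    (h1 : 0 < l 1) (hmono : Monotone l)
    (htop : Tendsto l atTop atTop)
    (C : ℝ) (hC : 0 < C) (m : ℕ)
    (N : ℝ → ℝ) (hN : ∀ t, N t = (Nat.card {i : ℕ | l i < t} : ℝ))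
    (hlap : Tendsto (fun s : ℝ =>
        (s * ∫ t in Set.Ioi (0 : ℝ), Real.exp (-s * t) * N t) /
          (C * Real.Gamma ((m : ℝ) / 2 + 1) * s ^ (-(m : ℝ) / 2)))
      (nhdsWithin 0 (Set.Ioi 0)) (nhds 1)) :
    Tendsto (fun t : ℝ => N t / (C * t ^ ((m : ℝ) / 2))) atTop (nhds 1) := by
  have hNmono : Monotone N := funext hN ▸
    Nat.mono_cast.comp (monotone_natCard_setOf_lt (Nat.cofinite_eq_atTop ▸ htop))
  refine tauberian_counting_function_general (hNmono.monotoneOn _) (fun t _ => ?_)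
    (neg_one_lt_zero.trans_le (by positivity)) hC.ne' (by simpa only [neg_div] using hlap)
  rw [hN]
  positivity
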